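/- Let (X,d_X) and (Y,d_Y) be Polish spaces, f a continuous semi-flow on X and g a continuous semi-flow on Y, and let h : X → Y be a homeomorphism such that h(O₊(f,x)) = O₊(g, h(x)) for every x ∈ X. Then (Y,g) is chaotic if and only if (X,f) is chaotic. -/

import Mathlib

open Filter Topology Metric Set TopologicalSpace

/-- `f` is a continuous semi-flow on `X`: jointly continuous on `[0,∞) × X`,
`f 0 x = x`, and `f s (f t x) = f (s+t) x` for `s, t ≥ 0`. -/
def IsSemiflow {X : Type*} [MetricSpace X] (f : ℝ → X → X) : Prop :=
  ContinuousOn (fun p : ℝ × X => f p.1 p.2) (Set.Ici 0 ×ˢ Set.univ) ∧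
  (∀ x, f 0 x = x) ∧
  (∀ s t : ℝ, 0 ≤ s → 0 ≤ t → ∀ x, f s (f t x) = f (s + t) x)

/-- the forward orbit `O₊(f,x) = {f t x : t ≥ 0}`. -/
def posOrbit {X : Type*} [MetricSpace X] (f : ℝ → X → X) (x : X) : Set X :=
  (fun t => f t x) '' Set.Ici (0 : ℝ)

/-- `x` is Birkhoff recurrent for `f`. -/
def BirkhoffRecurrent {X : Type*} [MetricSpace X] (f : ℝ → X → X) (x : X) : Prop :=
  ∀ ε > (0:ℝ), ∃ T > (0:ℝ), ∀ τ ≥ (0:ℝ), ∀ υ ≥ (0:ℝ),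
    ∃ t : ℝ, τ < t ∧ t < τ + T ∧ dist (f υ x) (f t x) < ε

/-- `f` is topologically quasi-transitive: some forward orbit is dense. -/
def QuasiTransitive {X : Type*} [MetricSpace X] (f : ℝ → X → X) : Prop :=
  ∃ x : X, Dense (posOrbit f x)

/-- `(X,f)` is chaotic: quasi-transitive, Birkhoff recurrent points dense, and
two motions far away from each other. -/
def Chaotic {X : Type*} [MetricSpace X] (f : ℝ → X → X) : Prop :=
  QuasiTransitive f ∧ Dense {x : X | BirkhoffRecurrent f x} ∧
  ∃ x y : X, closure (posOrbit f x) ∩ closure (posOrbit f y) = ∅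

lemma IsSemiflow.cont_snd {X : Type*} [MetricSpace X] {f : ℝ → X → X} (hf : IsSemiflow f)
    {t : ℝ} (ht : 0 ≤ t) : Continuous (f t) := by
  have : Continuous ((fun p : ℝ × X => f p.1 p.2) ∘ (fun x : X => (t, x))) :=
    hf.1.comp_continuous (by fun_prop) (fun x => ⟨ht, mem_univ _⟩)
  exact this

lemma IsSemiflow.mem_closure {X : Type*} [MetricSpace X] {f : ℝ → X → X} (hf : IsSemiflow f)
    {x y : X} (hy : y ∈ closure (posOrbit f x)) {t : ℝ} (ht : 0 ≤ t) :
    f t y ∈ closure (posOrbit f x) := by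
  refine map_mem_closure (hf.cont_snd ht) hy ?_
  rintro _ ⟨s, hs, rfl⟩
  exact ⟨t + s, add_nonneg ht hs, (hf.2.2 t s ht hs x).symm⟩

/-- compact minimal orbit closure -/
def CompactMinimal {X : Type*} [MetricSpace X] (f : ℝ → X → X) (x : X) : Prop :=
  IsCompact (closure (posOrbit f x)) ∧
    ∀ y ∈ closure (posOrbit f x), closure (posOrbit f x) ⊆ closure (posOrbit f y)

lemma CompactMinimal.birkhoff {X : Type*} [MetricSpace X] {f : ℝ → X → X} (hf : IsSemiflow f)
    {x : X} (h : CompactMinimal f x) : BirkhoffRecurrent f x := by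
  obtain ⟨hc, hm⟩ := h
  intro ε hε
  let V : ℕ → Set (X × X) := fun n => ⋃ t ∈ Ioo (0 : ℝ) (n + 1), {p | dist p.2 (f t p.1) < ε}
  have hVo : ∀ n, IsOpen (V n) := by
    intro n
    refine isOpen_biUnion fun t ht => ?_
    have := hf.cont_snd ht.1.le
    exact isOpen_lt (by fun_prop) continuous_const
  have hcov : closure (posOrbit f x) ×ˢ closure (posOrbit f x) ⊆ ⋃ n, V n := by
    rintro ⟨y, z⟩ ⟨hy, hz⟩
    have h1 := hm _ (hf.mem_closure hy zero_le_one) hz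
    obtain ⟨_, ⟨s, hs, rfl⟩, hd⟩ := Metric.mem_closure_iff.1 h1 ε hε
    have hs : (0 : ℝ) ≤ s := hs
    obtain ⟨n, hn⟩ := exists_nat_gt (s + 1)
    refine mem_iUnion.2 ⟨n, mem_iUnion₂.2 ⟨s + 1, ⟨by linarith, by linarith⟩, ?_⟩⟩
    simp only [hf.2.2 s 1 hs zero_le_one] at hd
    exact hd
  have hmono : Monotone V := by
    intro m n hmn
    refine biUnion_subset_biUnion_left (Ioo_subset_Ioo_right ?_)
    have : (m : ℝ) ≤ n := by exact_mod_cast hmn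
    linarith
  obtain ⟨n, hn⟩ := (hc.prod hc).elim_directed_cover V hVo hcov hmono.directed_le
  refine ⟨n + 1, by positivity, fun τ hτ υ hυ => ?_⟩
  have hmem : (f τ x, f υ x) ∈ V n :=
    hn ⟨subset_closure ⟨τ, hτ, rfl⟩, subset_closure ⟨υ, hυ, rfl⟩⟩
  obtain ⟨t, ht, hd⟩ := mem_iUnion₂.1 hmem
  refine ⟨t + τ, by linarith [ht.1], by linarith [ht.2], ?_⟩
  rw [← hf.2.2 t τ ht.1.le hτ]
  exact hd

lemma BirkhoffRecurrent.compactMinimal {X : Type*} [MetricSpace X] [CompleteSpace X]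
    {f : ℝ → X → X} (hf : IsSemiflow f) {x : X} (h : BirkhoffRecurrent f x) :
    CompactMinimal f x := by
  constructor
  · refine TotallyBounded.isCompact_of_isClosed (TotallyBounded.closure ?_) isClosed_closure
    refine Metric.totallyBounded_iff.2 fun ε hε => ?_
    obtain ⟨T, hT, hr⟩ := h (ε / 2) (by positivity)
    have hK : IsCompact ((fun t => f t x) '' Icc 0 T) := by
      refine isCompact_Icc.image_of_continuousOn ?_
      have : ContinuousOn ((fun p : ℝ × X => f p.1 p.2) ∘ (fun t : ℝ => (t, x))) (Icc 0 T) :=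
        hf.1.comp (by fun_prop) (fun t ht => ⟨ht.1, mem_univ _⟩)
      exact this
    obtain ⟨s, hs, hsub⟩ := Metric.totallyBounded_iff.1 hK.totallyBounded (ε / 2) (by positivity)
    refine ⟨s, hs, ?_⟩
    rintro _ ⟨υ, hυ, rfl⟩
    obtain ⟨t, h0, h1, hd⟩ := hr 0 le_rfl υ hυ
    obtain ⟨c, hc, hcd⟩ := mem_iUnion₂.1 (hsub ⟨t, ⟨h0.le, by linarith⟩, rfl⟩)
    refine mem_iUnion₂.2 ⟨c, hc, ?_⟩
    rw [Metric.mem_ball] at hcd ⊢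
    have := dist_triangle (f υ x) (f t x) c
    simp only at hcd ⊢
    linarith
  · intro y hy
    refine closure_minimal ?_ isClosed_closure
    rintro _ ⟨υ, hυ, rfl⟩
    refine Metric.mem_closure_iff.2 fun ε hε => ?_
    obtain ⟨T, hT, hr⟩ := h (ε / 2) (by positivity)
    have hcont : Continuous (fun p : Icc (0 : ℝ) T × X => f p.1 p.2) := by
      have : Continuous ((fun p : ℝ × X => f p.1 p.2) ∘
          (fun p : Icc (0 : ℝ) T × X => ((p.1 : ℝ), p.2))) :=
        hf.1.comp_continuous (by fun_prop) (fun p => ⟨p.1.2.1, mem_univ _⟩)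
      exact this
    have hcl : IsClosed {p : Icc (0 : ℝ) T × X | dist (f υ x) (f p.1 p.2) ≤ ε / 2} :=
      isClosed_le (continuous_const.dist hcont) continuous_const
    have hcl2 := isClosedMap_snd_of_compactSpace _ hcl
    have hsub : posOrbit f x ⊆
        Prod.snd '' {p : Icc (0 : ℝ) T × X | dist (f υ x) (f p.1 p.2) ≤ ε / 2} := by
      rintro _ ⟨τ, hτ, rfl⟩
      have hτ : (0 : ℝ) ≤ τ := hτ
      obtain ⟨t, h0, h1, hd⟩ := hr τ hτ υ hυ
      refine ⟨(⟨t - τ, by linarith, by linarith⟩, f τ x), ?_, rfl⟩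
      simp only [mem_ofPred_eq]
      rw [hf.2.2 _ _ (by linarith) hτ, sub_add_cancel]
      exact hd.le
    obtain ⟨⟨s, y'⟩, hd, rfl⟩ := closure_minimal hsub hcl2 hy
    refine ⟨f s y', ⟨s, s.2.1, rfl⟩, ?_⟩
    simp only [mem_ofPred_eq] at hd ⊢
    linarith

lemma chaotic_transport {X Y : Type*} [MetricSpace X] [CompleteSpace X] [MetricSpace Y]
    (f : ℝ → X → X) (hf : IsSemiflow f) (g : ℝ → Y → Y) (hg : IsSemiflow g)
    (h : X ≃ₜ Y) (horb : ∀ x : X, h '' posOrbit f x = posOrbit g (h x))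
    (H : Chaotic f) : Chaotic g := by
  have hcl : ∀ x, closure (posOrbit g (h x)) = h '' closure (posOrbit f x) := fun x => by
    rw [← horb, h.image_closure]
  obtain ⟨⟨x, hx⟩, hB, a, b, hab⟩ := H
  refine ⟨⟨h x, ?_⟩, ?_, h a, h b, ?_⟩
  · rw [← horb]
    exact h.surjective.denseRange.dense_image h.continuous hx
  · refine (h.surjective.denseRange.dense_image h.continuous hB).mono ?_
    rintro _ ⟨z, hz, rfl⟩
    obtain ⟨hc, hm⟩ := BirkhoffRecurrent.compactMinimal hf hz
    refine CompactMinimal.birkhoff hg ⟨?_, ?_⟩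
    · rw [hcl]
      exact hc.image h.continuous
    · rw [hcl]
      rintro _ ⟨w, hw, rfl⟩
      rw [hcl]
      exact image_mono (hm w hw)
  · rw [hcl, hcl, ← image_inter h.injective, hab, image_empty]

/-- chaos is invariant under topological equivalence of
semi-flows. -/
theorem chaotic_invariant_under_topological_equivalence {X Y : Type*}
    [MetricSpace X] [CompleteSpace X] [SeparableSpace X]
    [MetricSpace Y] [CompleteSpace Y] [SeparableSpace Y]
    (f : ℝ → X → X) (hf : IsSemiflow f) (g : ℝ → Y → Y) (hg : IsSemiflow g)
    (h : X ≃ₜ Y) (horb : ∀ x : X, h '' posOrbit f x = posOrbit g (h x)) :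
    Chaotic g ↔ Chaotic f := by
  refine ⟨chaotic_transport g hg f hf h.symm fun y => ?_, chaotic_transport f hf g hg h horb⟩
  have := horb (h.symm y)
  rw [h.apply_symm_apply] at this
  rw [← this, ← image_comp]
  simp
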